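/- arXiv:1411.7657 — 3 statements merged into one kernel-verified Lean document; each statement's English description precedes it below -/
import Mathlib

section
/- Let m and n be positive integers such that m ≡ 0 or 1 (mod 4) and n is odd with n ≥ 11. Then λ_{mn}^{(n+1)/2} ≥ (5 · 2^{⌊(n-1)/3⌋ - 1} + 2)^m · 2^{⌊m/3⌋}, where λ_m^d denotes the number of Langford sequences of order m and defect d. -/
/-!
Write `n = 2 * h + 1` and call a permutation `f` of `{0, …, 2 * h}` *centred* if its displacements
`f x - x` are exactly the integers of `[-h, h]`.

*Product.* For `m ≡ 0, 1 (mod 4)` there is a Skolem sequence of order `m`. Inflate each of its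
positions to a block of length `n`, and for the pair of blocks at distance `k` match position `x` of
the left block with position `f x` of the right block, where `f` is a centred permutation. The
distances `n * k + (f x - x)` are then exactly the integers of `[h + 1, h + m * n]`, so that a
Langford sequence of order `m * n` and defect `h + 1` results. The permutations can be chosen
independently for the `m` pairs and are recovered from the sequence, so that `M` centred
permutations give `M ^ m` Langford sequences (`pow_le_langfordCount`). One Skolem sequence suffices:
the factor `2 ^ (m / 3)` is obtained from `2 * B ^ 3 ≤ M ^ 3`, where `B` is the base of the
`m`-th power in the theorem (`pow_mul_two_pow_le`).

*Centred permutations.* It remains to find enough centred permutations. Those of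
`{0, …, 2 * q + 4}` which preserve the initial segment of length `q + 5` (the *split* ones) satisfy
a recursion: inserting five points in front of the initial segment and five points in front of the
final segment, and sending each new block to the end of its segment, shifts all old displacements by
`-5`, while the new blocks contribute the missing displacements, in consecutive groups of five. On
each new block any of the six centred permutations of five points may be used, hence `q ↦ q + 5`
multiplies the number of split permutations by `36` (`HasSplits.step`), whereas `B` grows at most by
the factor `16`. The recursion starts from explicit lists for `q ≤ 4`.
-/

/-- A Langford sequence of order `m` and defect `d`, modeled as a function
`l : Fin (2*m) → ℕ`: for every `k ∈ [d, d+m-1]` there are exactly two subscripts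
carrying the value `k`, and they differ by exactly `k`. -/
def IsLangford (m d : ℕ) (l : Fin (2 * m) → ℕ) : Prop :=
  ∀ k : ℕ, d ≤ k → k ≤ d + m - 1 →
    ∃ i j : Fin (2 * m), i < j ∧ (j : ℕ) - (i : ℕ) = k ∧
      (∀ t : Fin (2 * m), l t = k ↔ t = i ∨ t = j)

/-- `λ_m^d`: the number of Langford sequences of order `m` and defect `d`. -/
noncomputable def langfordCount (m d : ℕ) : ℕ :=
  Nat.card {l : Fin (2 * m) → ℕ // IsLangford m d l}

/-! ### Skolem sequences -/

/-- `IsSkolem m a`: the pairs of positions `(a k, a k + k)`, `1 ≤ k ≤ m`, form a Skolem sequence of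
order `m` on the positions `0, …, 2 * m - 1`. Only pairwise disjointness of the pairs is recorded;
that they cover all positions then follows by counting. -/
def IsSkolem (m : ℕ) (a : ℕ → ℕ) : Prop :=
  (∀ k, 1 ≤ k → k ≤ m → a k + k < 2 * m) ∧
  ∀ k l, 1 ≤ k → k ≤ m → 1 ≤ l → l ≤ m →
    (a k = a l → k = l) ∧ (a k + k = a l + l → k = l) ∧ a k ≠ a l + l

/-- Even `k` are nested around the position `6 * s - 1`; odd `k` fall into two nests, plus four
exceptional pairs. -/
lemma exists_isSkolem_four_mul (s : ℕ) (hs : 0 < s) : ∃ a, IsSkolem (4 * s) a := by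
  obtain ⟨a, ha⟩ : ∃ a : ℕ → ℕ, ∀ k, 1 ≤ k → k ≤ 4 * s →
      (k % 2 = 0 ∧ 2 * a k + k = 12 * s - 2) ∨
      (k = 1 ∧ a k = s - 1) ∨
      (k = 4 * s - 1 ∧ a k = 2 * s) ∨
      (k = 2 * s - 1 ∧ 1 < s ∧ a k = 2 * s - 1) ∨
      (k = 2 * s + 1 ∧ 1 < s ∧ a k = s - 2) ∨
      (k % 2 = 1 ∧ 2 * s + 1 < k ∧ k < 4 * s - 1 ∧ 2 * a k + k = 4 * s - 3) ∨
      (k % 2 = 1 ∧ 1 < k ∧ k < 2 * s - 1 ∧ 2 * a k + k = 4 * s - 1) := by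
    refine ⟨fun k => if k % 2 = 0 then (12 * s - 2 - k) / 2 else if k = 1 then s - 1 else
      if k = 4 * s - 1 then 2 * s else if k = 2 * s - 1 then 2 * s - 1 else
      if k = 2 * s + 1 then s - 2 else if 2 * s < k then (4 * s - 3 - k) / 2 else
      (4 * s - 1 - k) / 2, fun k h1 h2 => ?_⟩
    dsimp only
    split_ifs
    · exact Or.inl (by omega)
    · exact Or.inr (Or.inl (by omega))
    · exact Or.inr (Or.inr (Or.inl (by omega)))
    · exact Or.inr (Or.inr (Or.inr (Or.inl (by omega))))
    · exact Or.inr (Or.inr (Or.inr (Or.inr (Or.inl (by omega)))))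
    · exact Or.inr (Or.inr (Or.inr (Or.inr (Or.inr (Or.inl (by omega))))))
    · exact Or.inr (Or.inr (Or.inr (Or.inr (Or.inr (Or.inr (by omega))))))
  refine ⟨a, fun k h1 h2 => ?_, fun k l hk1 hk2 hl1 hl2 => ?_⟩
  · have := ha k h1 h2
    omega
  · rcases ha k hk1 hk2 with h | h | h | h | h | h | h <;>
      rcases ha l hl1 hl2 with h' | h' | h' | h' | h' | h' | h' <;>
      refine ⟨fun e => ?_, fun e => ?_, fun e => ?_⟩ <;> omega

/-- Orders `1` and `5` do not follow the general pattern and are treated separately. -/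
lemma exists_isSkolem_four_mul_add_one (s : ℕ) : ∃ a, IsSkolem (4 * s + 1) a := by
  rcases Nat.lt_or_ge 1 s with hs | hs
  · obtain ⟨a, ha⟩ : ∃ a : ℕ → ℕ, ∀ k, 1 ≤ k → k ≤ 4 * s + 1 →
        (k % 2 = 0 ∧ 2 * a k + k = 12 * s + 2) ∨
        (k = 1 ∧ a k = s) ∨
        (k = 4 * s + 1 ∧ a k = 2 * s) ∨
        (k = 2 * s - 1 ∧ a k = 2 * s + 1) ∨
        (k % 2 = 1 ∧ 2 * s < k ∧ k < 4 * s + 1 ∧ 2 * a k + k = 4 * s - 1) ∨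
        (k % 2 = 1 ∧ 1 < k ∧ k < 2 * s - 1 ∧ 2 * a k + k = 4 * s + 1) := by
      refine ⟨fun k => if k % 2 = 0 then (12 * s + 2 - k) / 2 else if k = 1 then s else
        if k = 4 * s + 1 then 2 * s else if k = 2 * s - 1 then 2 * s + 1 else
        if 2 * s < k then (4 * s - 1 - k) / 2 else (4 * s + 1 - k) / 2, fun k h1 h2 => ?_⟩
      dsimp only
      split_ifs
      · exact Or.inl (by omega)
      · exact Or.inr (Or.inl (by omega))
      · exact Or.inr (Or.inr (Or.inl (by omega)))
      · exact Or.inr (Or.inr (Or.inr (Or.inl (by omega))))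
      · exact Or.inr (Or.inr (Or.inr (Or.inr (Or.inl (by omega)))))
      · exact Or.inr (Or.inr (Or.inr (Or.inr (Or.inr (by omega)))))
    refine ⟨a, fun k h1 h2 => ?_, fun k l hk1 hk2 hl1 hl2 => ?_⟩
    · have := ha k h1 h2
      omega
    · rcases ha k hk1 hk2 with h | h | h | h | h | h <;>
        rcases ha l hl1 hl2 with h' | h' | h' | h' | h' | h' <;>
        refine ⟨fun e => ?_, fun e => ?_, fun e => ?_⟩ <;> omega
  · interval_cases s
    · refine ⟨fun _ => 0, fun k _ _ => ?_, fun k l _ _ _ _ => ?_⟩ <;> dsimp only <;> omega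
    · -- the Skolem sequence `1 1 3 4 5 3 2 4 2 5`
      refine ⟨fun k => if k = 1 then 0 else if k = 2 then 6 else k - 1,
        fun k _ _ => ?_, fun k l _ _ _ _ => ?_⟩
      · interval_cases k <;> simp
      · interval_cases k <;> interval_cases l <;> simp

lemma exists_isSkolem (m : ℕ) (hm : 0 < m) (hmod : m % 4 = 0 ∨ m % 4 = 1) :
    ∃ a, IsSkolem m a := by
  rcases hmod with h | h
  · obtain ⟨a, ha⟩ := exists_isSkolem_four_mul (m / 4) (by omega)
    exact ⟨a, by rwa [show 4 * (m / 4) = m by omega] at ha⟩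
  · obtain ⟨a, ha⟩ := exists_isSkolem_four_mul_add_one (m / 4)
    exact ⟨a, by rwa [show 4 * (m / 4) + 1 = m by omega] at ha⟩

/-! ### Centred and split permutations -/

/-- `f` permutes `{0, …, 2 * h}` and the displacements `f x - x` are pairwise distinct and lie in
`[-h, h]`, so that every element of `[-h, h]` is a displacement. Values of `f` outside
`{0, …, 2 * h}` are irrelevant. -/
def IsCentred (h : ℕ) (f : ℕ → ℕ) : Prop :=
  (∀ x < 2 * h + 1, f x < 2 * h + 1 ∧ x ≤ f x + h ∧ f x ≤ x + h) ∧
  ∀ x < 2 * h + 1, ∀ y < 2 * h + 1, (f x = f y → x = y) ∧ (f x + y = f y + x → x = y)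

/-- A centred permutation of `{0, …, 2 * q + 4}` preserving the initial segment
`{0, …, q + 4}`, and hence also the final segment of length `q`. -/
def IsSplit (q : ℕ) (f : ℕ → ℕ) : Prop :=
  IsCentred (q + 2) f ∧ ∀ x < 2 * (q + 2) + 1, f x < q + 5 ↔ x < q + 5

instance (h : ℕ) (f : ℕ → ℕ) : Decidable (IsCentred h f) := by
  unfold IsCentred; infer_instance

instance (q : ℕ) (f : ℕ → ℕ) : Decidable (IsSplit q f) := by
  unfold IsSplit; infer_instance

/-- There are at least `M` split permutations of `{0, …, 2 * q + 4}`. -/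
def HasSplits (M q : ℕ) : Prop :=
  ∃ F : Fin M → ℕ → ℕ, (∀ i, IsSplit q (F i)) ∧
    ∀ i j, (∀ x < 2 * (q + 2) + 1, F i x = F j x) → i = j

/-- The split permutation of `{0, …, 2 * q + 14}` obtained from `f` by inserting a block of five
points in front of each of the two segments preserved by `f`; each new block is sent to the end of
its segment, according to `g₁` and `g₂` respectively. -/
def insertBlocks (q : ℕ) (f g₁ g₂ : ℕ → ℕ) (x : ℕ) : ℕ :=
  if x < 5 then q + 5 + g₁ x
  else if x < q + 10 then f (x - 5)
  else if x < q + 15 then 2 * q + 10 + g₂ (x - (q + 10))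
  else f (x - 10) + 5

/-- The old displacements are shifted by `-5`, to `[-q - 7, q - 3]`; the two blocks contribute the
displacements `q + [-2, 2]` and `q + 5 + [-2, 2]`. -/
lemma IsSplit.insertBlocks {q : ℕ} {f g₁ g₂ : ℕ → ℕ} (hf : IsSplit q f)
    (h₁ : IsCentred 2 g₁) (h₂ : IsCentred 2 g₂) :
    IsSplit (q + 5) (insertBlocks q f g₁ g₂) := by
  obtain ⟨⟨hf, hfi⟩, hfs⟩ := hf
  -- each point lies in one of four intervals, on each of which the value is known
  have key : ∀ x < 2 * (q + 5 + 2) + 1, ∃ z,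
      (x < 5 ∧ z = x ∧ _root_.insertBlocks q f g₁ g₂ x = q + 5 + g₁ z ∧
        g₁ z < 5 ∧ z ≤ g₁ z + 2 ∧ g₁ z ≤ z + 2) ∨
      (x = z + 5 ∧ z < q + 5 ∧ _root_.insertBlocks q f g₁ g₂ x = f z ∧
        f z < q + 5 ∧ z ≤ f z + (q + 2) ∧ f z ≤ z + (q + 2)) ∨
      (x = z + (q + 10) ∧ z < 5 ∧ _root_.insertBlocks q f g₁ g₂ x = 2 * q + 10 + g₂ z ∧
        g₂ z < 5 ∧ z ≤ g₂ z + 2 ∧ g₂ z ≤ z + 2) ∨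
      (x = z + 10 ∧ q + 5 ≤ z ∧ z < 2 * q + 5 ∧ _root_.insertBlocks q f g₁ g₂ x = f z + 5 ∧
        q + 5 ≤ f z ∧ f z < 2 * q + 5 ∧ z ≤ f z + (q + 2) ∧ f z ≤ z + (q + 2)) := by
    intro x hx
    unfold _root_.insertBlocks
    split_ifs with c1 c2 c3
    · exact ⟨x, Or.inl ⟨c1, rfl, rfl, h₁.1 x c1⟩⟩
    · have := hf (x - 5) (by omega)
      have := hfs (x - 5) (by omega)
      refine ⟨x - 5, Or.inr (Or.inl ⟨by omega, by omega, rfl, ?_⟩)⟩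
      omega
    · refine ⟨x - (q + 10), Or.inr (Or.inr (Or.inl ⟨by omega, by omega, rfl, ?_⟩))⟩
      exact h₂.1 _ (by omega)
    · have := hf (x - 10) (by omega)
      have := hfs (x - 10) (by omega)
      refine ⟨x - 10, Or.inr (Or.inr (Or.inr ⟨by omega, by omega, by omega, rfl, ?_⟩))⟩
      omega
  refine ⟨⟨fun x hx => ?_, fun x hx y hy => ?_⟩, fun x hx => ?_⟩
  · obtain ⟨z, hz⟩ := key x hx
    omega
  · obtain ⟨z, hz⟩ := key x hx
    obtain ⟨w, hw⟩ := key y hy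
    rcases hz with hz | hz | hz | hz <;> rcases hw with hw | hw | hw | hw
    all_goals first
      | (constructor <;> intro e <;> omega)
      | (have := h₁.2 z (by omega) w (by omega); constructor <;> intro e <;> omega)
      | (have := h₂.2 z (by omega) w (by omega); constructor <;> intro e <;> omega)
      | (have := hfi z (by omega) w (by omega); constructor <;> intro e <;> omega)
  · obtain ⟨z, hz⟩ := key x hx
    omega

lemma HasSplits.of_fintype {ι : Type*} [Fintype ι] {q : ℕ} (F : ι → ℕ → ℕ)
    (hF : ∀ i, IsSplit q (F i)) (hinj : ∀ i j, (∀ x < 2 * (q + 2) + 1, F i x = F j x) → i = j) :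
    HasSplits (Fintype.card ι) q := by
  let e := (Fintype.equivFin ι).symm
  exact ⟨fun i => F (e i), fun i => hF _, fun i j h => e.injective (hinj _ _ h)⟩

/-- There are six centred permutations of five points, and two of them are inserted. -/
lemma HasSplits.step {M q : ℕ} (h6 : HasSplits 6 0) (h : HasSplits M q) :
    HasSplits (36 * M) (q + 5) := by
  obtain ⟨G, hG, hGi⟩ := h6
  obtain ⟨F, hF, hFi⟩ := h
  have := HasSplits.of_fintype (ι := (Fin 6 × Fin 6) × Fin M) (q := q + 5)
    (fun i => insertBlocks q (F i.2) (G i.1.1) (G i.1.2))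
    (fun i => (hF _).insertBlocks (hG _).1 (hG _).1) (by
      rintro ⟨⟨a, b⟩, c⟩ ⟨⟨a', b'⟩, c'⟩ h
      simp only at h
      have ha : a = a' := hGi _ _ fun x hx => by
        have := h x (by omega)
        simpa [insertBlocks, show x < 5 by omega] using this
      have hb : b = b' := hGi _ _ fun x hx => by
        have := h (x + (q + 10)) (by omega)
        simpa [insertBlocks, show ¬ x + (q + 10) < 5 by omega, show x < 5 by omega,
          show x + (q + 10) < q + 15 by omega] using this
      have hc : c = c' := hFi _ _ fun x hx => by
        by_cases hxq : x < q + 5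
        · have := h (x + 5) (by omega)
          simpa [insertBlocks, show x + 5 < q + 10 by omega] using this
        · have := h (x + 10) (by omega)
          simpa [insertBlocks, show ¬ x + 10 < 5 by omega, show ¬ x + 10 < q + 10 by omega,
            show ¬ x + 10 < q + 15 by omega] using this
      rw [ha, hb, hc])
  simpa using this

/-- The function whose value at `x` is the base-16 digit of `c` of weight `16 ^ x`. -/
def decode (c x : ℕ) : ℕ := c / 16 ^ x % 16

/-- A natural number below `16 ^ n` is determined by its first `n` hexadecimal digits, so distinct
codes in a list give distinct permutations. -/
lemma HasSplits.of_codes {q : ℕ} (L : List ℕ) (hnd : L.Nodup)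
    (hlt : ∀ c ∈ L, c < 16 ^ (2 * (q + 2) + 1)) (hL : ∀ c ∈ L, IsSplit q (decode c)) :
    HasSplits L.length q := by
  have hdig : ∀ n c d : ℕ, c < 16 ^ n → d < 16 ^ n → (∀ x < n, decode c x = decode d x) →
      c = d := by
    intro n
    induction n with
    | zero => intro c d hc hd _; simp at hc hd; omega
    | succ n ih =>
      intro c d hc hd h
      have h0 := h 0 (by omega)
      simp only [decode, pow_zero, Nat.div_one] at h0
      have := ih (c / 16) (d / 16) (by rw [pow_succ] at hc; omega)
        (by rw [pow_succ] at hd; omega) fun x hx => by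
          have := h (x + 1) (by omega)
          simpa only [decode, pow_succ', ← Nat.div_div_eq_div_mul] using this
      omega
  refine ⟨fun i => decode L[i], fun i => hL _ (List.getElem_mem _), fun i j h => ?_⟩
  have := hdig _ _ _ (hlt _ (List.getElem_mem i.2)) (hlt _ (List.getElem_mem j.2)) h
  exact Fin.ext ((List.Nodup.getElem_inj_iff hnd).1 this)

/-- Split permutations for `q = 0`, encoded as in `decode`: the base-16 digit of weight
`16 ^ x` is the value at `x`. For `q = 0` these are all the centred permutations of five points. -/
def codes0 : List ℕ :=
  [201760, 147760, 144385, 270385, 267010, 213010]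

/-- Split permutations for `q = 1`, encoded as in `decode`: the base-16 digit of weight
`16 ^ x` is the value at `x`. -/
def codes1 : List ℕ :=
  [104990001, 102977601, 103892226, 104137026, 103093251, 104943651]

/-- Split permutations for `q = 2`, encoded as in `decode`: the base-16 digit of weight
`16 ^ x` is the value at `x`. -/
def codes2 : List ℕ :=
  [32249042496, 32263788096, 32249046096, 32263791696, 32267834946, 32263921746]

/-- Split permutations for `q = 3`, encoded as in `decode`: the base-16 digit of weight
`16 ^ x` is the value at `x`. -/
def codes3 : List ℕ :=
  [9458109409105, 9458625505105, 9458109412705, 9458625508705, 10618252846930, 11584620488530,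
    10618031662930, 11584399304530, 10618252850530, 11584620492130, 10618031666530,
    11584399308130, 10617764579155, 11584132220755, 10618266851155, 11584634492755, 9458614806355,
    9459147491155, 9459162236755, 9458625638755, 10618520237155, 11584887878755, 10618534982755,
    11584902624355, 9458106590980, 9458342520580, 9458407270180, 10618520233780]

/-- Split permutations for `q = 4`, encoded as in `decode`: the base-16 digit of weight
`16 ^ x` is the value at `x`. -/
def codes4 : List ℕ :=
  [2722129138186338, 2722130140887138, 3019001550960738, 3266391667210338, 3018998012016738,
    3266388128266338, 2722129138189938, 2722130140890738, 3019001550964338, 3266391667213938,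
    3018998012020338, 3266388128269938, 2740680124299363, 2756142006564963, 3268445438244963,
    3036517204260963, 3268453474596963, 3036525240612963, 2740687703537763, 2756149585803363,
    3268457529636963, 3036529295652963, 3268457765566563, 3036529531582563, 2740680124302963,
    2756142006568563, 3268445438248563, 3036517204264563, 3268453474600563, 3036525240616563,
    2740687703541363, 2756149585806963, 3268457529640563, 3036529295656563, 3268457765570163,
    3036529531586163, 3018993471653988, 3266383587903588, 3018997246527588, 3266387362777188,
    3268445170239588, 3036516936255588, 3268448945113188, 3036520711129188, 2740679650777188,
    2756141533042788, 2740684399781988, 2756146282047588, 2722125868709988, 3268457529817188,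
    3036529295833188, 3268457765746788, 3036529531762788]

lemma hasSplits_zero : HasSplits 6 0 :=
  .of_codes codes0 (by decide) (by decide) (by decide +kernel)

lemma hasSplits_one : HasSplits 6 1 :=
  .of_codes codes1 (by decide) (by decide) (by decide +kernel)

lemma hasSplits_two : HasSplits 6 2 :=
  .of_codes codes2 (by decide) (by decide) (by decide +kernel)

lemma hasSplits_three : HasSplits 28 3 :=
  .of_codes codes3 (by decide +kernel) (by decide +kernel) (by decide +kernel)

lemma hasSplits_four : HasSplits 53 4 :=
  .of_codes codes4 (by decide +kernel) (by decide +kernel) (by decide +kernel)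

/-- The factor `2` leaves room for `2 ^ (m / 3)` once the `m`-th power is taken. -/
lemma exists_hasSplits (q : ℕ) (hq : 3 ≤ q) :
    ∃ M, HasSplits M q ∧ 2 * (5 * 2 ^ ((2 * q + 4) / 3 - 1) + 2) ^ 3 ≤ M ^ 3 := by
  induction q using Nat.strong_induction_on with
  | _ q ih =>
    by_cases hq8 : q < 8
    · interval_cases q
      · exact ⟨_, hasSplits_three, by norm_num⟩
      · exact ⟨_, hasSplits_four, by norm_num⟩
      · exact ⟨_, hasSplits_zero.step hasSplits_zero, by norm_num⟩
      · exact ⟨_, hasSplits_zero.step hasSplits_one, by norm_num⟩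
      · exact ⟨_, hasSplits_zero.step hasSplits_two, by norm_num⟩
    · obtain ⟨q, rfl⟩ : ∃ r, q = r + 5 := ⟨q - 5, by omega⟩
      obtain ⟨M, hM, hle⟩ := ih q (by omega) (by omega)
      refine ⟨_, hasSplits_zero.step hM, ?_⟩
      -- the exponent of `2` grows by at most four, and `2 ^ 4 ≤ 36`
      have hpow : 2 ^ ((2 * (q + 5) + 4) / 3 - 1) ≤ 2 ^ ((2 * q + 4) / 3 - 1) * 16 :=
        (Nat.pow_le_pow_right (by norm_num)
          (show _ ≤ (2 * q + 4) / 3 - 1 + 4 by omega)).trans_eq (pow_add _ _ _)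
      calc 2 * (5 * 2 ^ ((2 * (q + 5) + 4) / 3 - 1) + 2) ^ 3
          ≤ 2 * (36 * (5 * 2 ^ ((2 * q + 4) / 3 - 1) + 2)) ^ 3 := by
            gcongr
            omega
        _ = 36 ^ 3 * (2 * (5 * 2 ^ ((2 * q + 4) / 3 - 1) + 2) ^ 3) := by ring
        _ ≤ 36 ^ 3 * M ^ 3 := by gcongr
        _ = (36 * M) ^ 3 := by ring

/-! ### The product of a Skolem sequence with centred permutations -/

/-- All `2 * m` positions are used up by the `2 * m` prescribed occurrences of the values
`d, …, d + m - 1`. -/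
lemma IsLangford.lt {m d : ℕ} {l : Fin (2 * m) → ℕ} (hl : IsLangford m d l) (t : Fin (2 * m)) :
    l t < d + m := by
  have h : ∀ k : Fin m, ∃ i j : Fin (2 * m), i < j ∧ (j : ℕ) - (i : ℕ) = d + k ∧
      ∀ t, l t = d + k ↔ t = i ∨ t = j := fun k => hl (d + k) (by omega) (by omega)
  choose i j hij _ hl' using h
  let Q : Fin m × Bool → Fin (2 * m) := fun p => if p.2 then i p.1 else j p.1
  have hQ : ∀ p, l (Q p) = d + p.1 := by
    rintro ⟨k, b⟩
    rw [hl']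
    cases b <;> simp [Q]
  have hinj : Function.Injective Q := by
    rintro ⟨k, b⟩ ⟨k', b'⟩ h
    have hk : k = k' := by
      have h1 := hQ (k, b)
      rw [h, hQ] at h1
      simp only at h1
      omega
    subst hk
    have := (hij k).ne
    have := (hij k).ne'
    cases b <;> cases b' <;> simp_all [Q]
  have hbij := (Fintype.bijective_iff_injective_and_card Q).2 ⟨hinj, by simp [mul_comm]⟩
  obtain ⟨p, rfl⟩ := hbij.2 t
  rw [hQ]
  omega

lemma finite_isLangford (m d : ℕ) : Finite {l : Fin (2 * m) → ℕ // IsLangford m d l} :=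
  Finite.of_injective
    (fun l (t : Fin (2 * m)) => (⟨l.1 t, l.2.lt t⟩ : Fin (d + m)))
    fun _ _ h => Subtype.ext (funext fun t => congrArg Fin.val (congrFun h t))

section Product

variable {m h : ℕ} {a : ℕ → ℕ}

/-- Two elements `n * b + x`, `n * c + y` with `x, y < n` agree only if `b = c` and `x = y`. -/
lemma block_inj {n b c x y : ℕ} (hx : x < n) (hy : y < n) (e : n * b + x = n * c + y) :
    b = c ∧ x = y := by
  have hb : b = c := by
    have := congrArg (· / n) e
    simpa [Nat.mul_add_div (by omega : 0 < n), Nat.div_eq_of_lt hx, Nat.div_eq_of_lt hy] using this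
  subst hb
  exact ⟨rfl, by omega⟩

/-- The `2 * m` positions of the Skolem sequence are inflated to blocks of length `2 * h + 1`.
Position `x` of the left block of the pair for `k + 1` is matched with position `f k x` of the
right block; `blockPos` lists the left (`false`) and right (`true`) ends of these pairs. -/
def blockPos (h : ℕ) (a : ℕ → ℕ) (f : ℕ → ℕ → ℕ) (k : ℕ) (b : Bool) (x : ℕ) : ℕ :=
  if b then (2 * h + 1) * (a (k + 1) + (k + 1)) + f k x else (2 * h + 1) * a (k + 1) + x

/-- The distance between the two ends of a pair, as listed by `blockPos`. -/
def blockVal (h : ℕ) (f : ℕ → ℕ → ℕ) (k x : ℕ) : ℕ := (2 * h + 1) * (k + 1) + f k x - x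

lemma blockPos_lt (ha : IsSkolem m a) {f : ℕ → ℕ → ℕ} (hf : ∀ k < m, IsCentred h (f k))
    {k x : ℕ} (hk : k < m) (hx : x < 2 * h + 1) (b : Bool) :
    blockPos h a f k b x < 2 * (m * (2 * h + 1)) := by
  have h1 := ha.1 (k + 1) (by omega) (by omega)
  have h2 := ((hf k hk).1 x hx).1
  have aux : ∀ c y, c < 2 * m → y < 2 * h + 1 → (2 * h + 1) * c + y < 2 * (m * (2 * h + 1)) := by
    intro c y hc hy
    calc (2 * h + 1) * c + y < (2 * h + 1) * (c + 1) := by rw [mul_add]; omega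
      _ ≤ (2 * h + 1) * (2 * m) := by gcongr; omega
      _ = _ := by ring
  unfold blockPos
  cases b
  · exact aux _ _ (by omega) hx
  · exact aux _ _ h1 h2

lemma blockPos_inj (ha : IsSkolem m a) {f : ℕ → ℕ → ℕ} (hf : ∀ k < m, IsCentred h (f k))
    {k k' x x' : ℕ} (hk : k < m) (hk' : k' < m) (hx : x < 2 * h + 1) (hx' : x' < 2 * h + 1)
    {b b' : Bool} (e : blockPos h a f k b x = blockPos h a f k' b' x') :
    k = k' ∧ b = b' ∧ x = x' := by
  have h1 := ha.2 (k + 1) (k' + 1) (by omega) (by omega) (by omega) (by omega)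
  have h1' := ha.2 (k' + 1) (k + 1) (by omega) (by omega) (by omega) (by omega)
  have h2 := ((hf k hk).1 x hx).1
  have h2' := ((hf k' hk').1 x' hx').1
  unfold blockPos at e
  cases b <;> cases b' <;> simp only [if_true, if_false, Bool.false_eq_true] at e
  · obtain ⟨e1, e2⟩ := block_inj hx hx' e
    exact ⟨by have := h1.1 e1; omega, rfl, e2⟩
  · exact absurd (block_inj hx h2' e).1 h1.2.2
  · exact absurd (block_inj h2 hx' e).1.symm h1'.2.2
  · obtain ⟨e1, e2⟩ := block_inj h2 h2' e
    obtain rfl : k = k' := by have := h1.2.1 e1; omega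
    exact ⟨rfl, rfl, ((hf k hk).2 x hx x' hx').1 e2⟩

/-- Since displacements are at most `h` in absolute value, `k` is the integer nearest to
`blockVal / (2 * h + 1)` (up to a shift by one), and the displacement then determines `x`. -/
lemma blockVal_inj {f : ℕ → ℕ → ℕ} (hf : ∀ k < m, IsCentred h (f k))
    {k k' x x' : ℕ} (hk : k < m) (hk' : k' < m) (hx : x < 2 * h + 1) (hx' : x' < 2 * h + 1)
    (e : blockVal h f k x = blockVal h f k' x') : k = k' ∧ x = x' := by
  have h2 := (hf k hk).1 x hx
  have h2' := (hf k' hk').1 x' hx'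
  have e' : (2 * h + 1) * k + (f k x + h - x) = (2 * h + 1) * k' + (f k' x' + h - x') := by
    unfold blockVal at e
    rw [mul_add, mul_add] at e
    omega
  obtain ⟨rfl, e2⟩ := block_inj (by omega) (by omega) e'
  exact ⟨rfl, ((hf k hk).2 x hx x' hx').2 (by omega)⟩

lemma blockVal_mem {f : ℕ → ℕ → ℕ} (hf : ∀ k < m, IsCentred h (f k))
    {k x : ℕ} (hk : k < m) (hx : x < 2 * h + 1) :
    h + 1 ≤ blockVal h f k x ∧ blockVal h f k x < h + 1 + m * (2 * h + 1) := by
  have h2 := (hf k hk).1 x hx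
  have h3 : (2 * h + 1) * (k + 1) ≤ m * (2 * h + 1) := by
    rw [mul_comm m]; gcongr; omega
  have h4 : 2 * h + 1 ≤ (2 * h + 1) * (k + 1) := Nat.le_mul_of_pos_right _ (by omega)
  unfold blockVal
  omega

/-- The Kotzig-type product of a Skolem sequence with centred permutations: every pair of blocks
carries its own permutation. -/
lemma exists_isLangford (ha : IsSkolem m a) (f : ℕ → ℕ → ℕ) (hf : ∀ k < m, IsCentred h (f k)) :
    ∃ l : Fin (2 * (m * (2 * h + 1))) → ℕ, IsLangford (m * (2 * h + 1)) (h + 1) l ∧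
      ∀ k (hk : k < m) b x (hx : x < 2 * h + 1),
        l ⟨blockPos h a f k b x, blockPos_lt ha hf hk hx b⟩ = blockVal h f k x := by
  let P : Fin m × Bool × Fin (2 * h + 1) → Fin (2 * (m * (2 * h + 1))) := fun p =>
    ⟨blockPos h a f p.1 p.2.1 p.2.2, blockPos_lt ha hf p.1.2 p.2.2.2 _⟩
  have hP : Function.Bijective P := by
    refine (Fintype.bijective_iff_injective_and_card P).2 ⟨?_, by simp; ring⟩
    rintro ⟨k, b, x⟩ ⟨k', b', x'⟩ e
    obtain ⟨h1, h2, h3⟩ := blockPos_inj ha hf k.2 k'.2 x.2 x'.2 (congrArg Fin.val e)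
    obtain rfl : b = b' := h2
    rw [Fin.ext h1, Fin.ext h3]
  let V : Fin m × Fin (2 * h + 1) → Fin (m * (2 * h + 1)) := fun p =>
    ⟨blockVal h f p.1 p.2 - (h + 1), by
      have := blockVal_mem hf p.1.2 p.2.2
      omega⟩
  have hV : Function.Bijective V := by
    refine (Fintype.bijective_iff_injective_and_card V).2 ⟨?_, by simp⟩
    rintro ⟨k, x⟩ ⟨k', x'⟩ e
    have e' := congrArg Fin.val e
    have h1 := blockVal_mem hf k.2 x.2
    have h2 := blockVal_mem hf k'.2 x'.2
    simp only [V] at e'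
    obtain ⟨h3, h4⟩ := blockVal_inj hf k.2 k'.2 x.2 x'.2 (by omega)
    rw [Fin.ext h3, Fin.ext h4]
  let E := Equiv.ofBijective P hP
  have hl : ∀ p, (fun t => blockVal h f (E.symm t).1 (E.symm t).2.2) (P p) =
      blockVal h f p.1 p.2.2 := by
    intro p
    have : E.symm (P p) = p := E.symm_apply_apply p
    simp only [this]
  refine ⟨fun t => blockVal h f (E.symm t).1 (E.symm t).2.2, fun v hv1 hv2 => ?_,
    fun k hk b x hx => hl (⟨k, hk⟩, b, ⟨x, hx⟩)⟩
  have hpos : 0 < m * (2 * h + 1) := Nat.mul_pos (by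
    rcases Nat.eq_zero_or_pos m with rfl | hm
    · simp at hv2; omega
    · exact hm) (by omega)
  obtain ⟨⟨k, x⟩, hkx⟩ := hV.2 ⟨v - (h + 1), by omega⟩
  have hv : blockVal h f k x = v := by
    have h1 := congrArg Fin.val hkx
    have h2 := blockVal_mem hf k.2 x.2
    simp only [V] at h1
    omega
  have hdist : blockPos h a f k true x = blockPos h a f k false x + v := by
    have h2 := ((hf k k.2).1 x x.2).2.1
    have h4 : 2 * h + 1 ≤ (2 * h + 1) * (k + 1) := Nat.le_mul_of_pos_right _ (by omega)
    rw [← hv]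
    simp only [blockPos, blockVal, if_true, if_false, Bool.false_eq_true]
    rw [mul_add (2 * h + 1) (a _)]
    omega
  refine ⟨P (k, false, x), P (k, true, x), ?_, ?_, fun t => ?_⟩
  · simp only [P, Fin.mk_lt_mk]
    omega
  · simp only [P]
    omega
  · obtain ⟨⟨k', b, x'⟩, rfl⟩ := hP.2 t
    rw [hl, hP.1.eq_iff, hP.1.eq_iff, ← hv]
    constructor
    · intro e
      obtain ⟨h1, h2⟩ := blockVal_inj hf k'.2 k.2 x'.2 x.2 e
      rw [Fin.ext h1, Fin.ext h2]
      cases b <;> simp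
    · rintro (e | e) <;> simp only [Prod.mk.injEq] at e <;> rw [e.1, e.2.2]

/-- The product determines all its permutations: the value at position `x` of the left block of
pair `k` is `(2 * h + 1) * (k + 1) + f k x - x`. -/
lemma pow_le_langfordCount (ha : IsSkolem m a) {M : ℕ} (F : Fin M → ℕ → ℕ)
    (hF : ∀ i, IsCentred h (F i)) (hinj : ∀ i j, (∀ x < 2 * h + 1, F i x = F j x) → i = j) :
    M ^ m ≤ langfordCount (m * (2 * h + 1)) (h + 1) := by
  let f : (Fin m → Fin M) → ℕ → ℕ → ℕ := fun c k => if hk : k < m then F (c ⟨k, hk⟩) else id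
  have hfF : ∀ c k (hk : k < m), f c k = F (c ⟨k, hk⟩) := fun c k hk => dif_pos hk
  have hf : ∀ c, ∀ k < m, IsCentred h (f c k) := fun c k hk => by
    rw [hfF c k hk]; exact hF _
  choose l hl hlv using fun c => exists_isLangford ha (f c) (hf c)
  have := finite_isLangford (m * (2 * h + 1)) (h + 1)
  have key := Nat.card_le_card_of_injective
    (fun c => (⟨l c, hl c⟩ : {l // IsLangford (m * (2 * h + 1)) (h + 1) l})) (by
      intro c c' e
      have e' : l c = l c' := congrArg Subtype.val e
      refine funext fun k => hinj _ _ fun x hx => ?_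
      -- left ends of pairs do not depend on the permutations, so the two values can be compared
      have h1 := hlv c k k.2 false x hx
      have h2 := hlv c' k k.2 false x hx
      rw [e'] at h1
      have h3 : blockVal h (f c) k x = blockVal h (f c') k x := h1.symm.trans h2
      have h4 : 2 * h + 1 ≤ (2 * h + 1) * (k + 1) := Nat.le_mul_of_pos_right _ (by omega)
      simp only [blockVal, hfF _ _ k.2, Fin.eta] at h3
      omega)
  simpa [langfordCount] using key

end Product

lemma pow_mul_two_pow_le {B M : ℕ} (hBM : 2 * B ^ 3 ≤ M ^ 3) (m : ℕ) :
    B ^ m * 2 ^ (m / 3) ≤ M ^ m := by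
  have hle : B ≤ M := by
    by_contra hlt
    have := Nat.pow_lt_pow_left (not_le.1 hlt) (three_ne_zero)
    omega
  calc B ^ m * 2 ^ (m / 3) = (2 * B ^ 3) ^ (m / 3) * B ^ (m % 3) := by
        conv_lhs => rw [← Nat.div_add_mod m 3, pow_add, pow_mul]
        rw [mul_pow, Nat.mul_add_div three_pos, Nat.div_eq_of_lt (Nat.mod_lt _ three_pos), add_zero]
        ring
    _ ≤ (M ^ 3) ^ (m / 3) * M ^ (m % 3) := by gcongr
    _ = M ^ m := by rw [← pow_mul, ← pow_add, Nat.div_add_mod]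

/-- For `m ≡ 0, 1 (mod 4)` and odd `n ≥ 11`:
`λ_{mn}^{(n+1)/2} ≥ (5·2^{⌊(n-1)/3⌋-1} + 2)^m · 2^⌊m/3⌋`. -/
theorem langford_count_bound (m n : ℕ) (hm : 0 < m)
    (hmod : m % 4 = 0 ∨ m % 4 = 1) (hn : 11 ≤ n) (hodd : Odd n) :
    (5 * 2 ^ ((n - 1) / 3 - 1) + 2) ^ m * 2 ^ (m / 3) ≤
      langfordCount (m * n) ((n + 1) / 2) := by
  obtain ⟨a, ha⟩ := exists_isSkolem m hm hmod
  obtain ⟨q, hq, rfl⟩ : ∃ q, 3 ≤ q ∧ n = 2 * (q + 2) + 1 := by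
    obtain ⟨h, rfl⟩ := hodd
    exact ⟨h - 2, by omega, by omega⟩
  obtain ⟨M, ⟨F, hF, hFi⟩, hM⟩ := exists_hasSplits q hq
  have h1 := pow_le_langfordCount ha F (fun i => (hF i).1) hFi
  rw [show (2 * (q + 2) + 1 + 1) / 2 = q + 2 + 1 by omega,
    show 2 * (q + 2) + 1 - 1 = 2 * q + 4 by omega]
  exact (pow_mul_two_pow_le hM m).trans h1
end

section
/- For every odd integer n ≥ 11, the number of bijections f from {1,...,n} to {1,...,n} such that the set {f(i) + f(i+1) : 1 ≤ i ≤ n-1} ∪ {f(1) + f(n)} consists of n consecutive integers is at least 5 · 2^{⌊(n-1)/3⌋ - 2} + 1. -/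
/-!
Write `n = 2m + 1` and let the labels be `0, …, n - 1`. Since `2` is invertible modulo `n`, a
labeling of the cycle can be replaced by its double modulo `n`. It therefore suffices to find
orderings `e₀, …, e_{n-1}` of `0, …, n - 1` in which consecutive terms have sums
`1, 3, …, 2n - 3` and `e₀ + e_{n-1} = n - 1`: halving modulo `n` (`half`) turns the sums
`2s + 1` into `s + m + 1` and the closing sum `n - 1` into `m`, so that all of `m, …, 3m` occur.
(These orderings encode the α-labelings of the path with `n` vertices.)

Fix `e₀ = 4`, so that `e_{n-1} = n - 5` (`IsOddSumPath`). Such orderings can be concatenated: after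
one of length `a`, append one of length `b` shifted by `a`; the sum at the junction is
`(a - 5) + (4 + a) = 2a - 1`, exactly the missing one (`IsOddSumPath.append`). There are at least
16 of them of length 12 (`blocks`), so adding 12 to `n` multiplies the number of orderings by at
least `16 = 2 ^ (12 / 3)`, which matches the growth of the claimed bound. A few explicit orderings
start the induction. Finally the `n` rotations of the cycle multiply the number of labelings by
`n`; the rotation can be recovered from the position of the term `4`.
-/

/-- `w` is an ordering of `0, …, n - 1` that starts at `4`, ends at `n - 5`, and whose sums of
consecutive terms cover all odd numbers `1, 3, …, 2n - 3`. -/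
def IsOddSumPath (n : ℕ) (w : List ℕ) : Prop :=
  w.Perm (List.range n) ∧
  (∀ s < n - 1, ∃ t < n - 1, w.getD t 0 + w.getD (t + 1) 0 = 2 * s + 1) ∧
  w.getD 0 0 = 4 ∧ w.getD (n - 1) 0 + 5 = n

instance (n : ℕ) (w : List ℕ) : Decidable (IsOddSumPath n w) := by
  unfold IsOddSumPath; infer_instance

theorem IsOddSumPath.length {n : ℕ} {w : List ℕ} (h : IsOddSumPath n w) : w.length = n := by
  simpa using h.1.length_eq

theorem IsOddSumPath.append {a b : ℕ} {c w : List ℕ} (hc : IsOddSumPath a c)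
    (hw : IsOddSumPath b w) : IsOddSumPath (a + b) (c ++ w.map (a + ·)) := by
  have lc := hc.length
  have lw := hw.length
  obtain ⟨pc, sc, zc, ec⟩ := hc
  obtain ⟨pw, sw, zw, ew⟩ := hw
  have left : ∀ t < a, (c ++ w.map (a + ·)).getD t 0 = c.getD t 0 := by
    intro t ht
    exact List.getD_append _ _ _ _ (by omega)
  have right : ∀ t < b, (c ++ w.map (a + ·)).getD (a + t) 0 = a + w.getD t 0 := by
    intro t ht
    rw [List.getD_append_right _ _ _ _ (by omega)]
    have h1 : a + t - c.length = t := by omega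
    have h2 : t < w.length := by omega
    simp [h1, List.getD_eq_getElem?_getD, h2]
  refine ⟨?_, ?_, ?_, ?_⟩
  · rw [List.range_add]
    exact pc.append (pw.map _)
  · intro s hs
    rcases lt_trichotomy s (a - 1) with h | h | h
    · obtain ⟨t, ht, e⟩ := sc s h
      refine ⟨t, by omega, ?_⟩
      rw [left t (by omega), left (t + 1) (by omega), e]
    · -- the junction
      refine ⟨a - 1, by omega, ?_⟩
      have h0 := right 0 (by omega)
      have h1 : a - 1 + 1 = a + 0 := by omega
      rw [left _ (by omega), h1, h0, zw]
      omega
    · obtain ⟨t, ht, e⟩ := sw (s - a) (by omega)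
      refine ⟨a + t, by omega, ?_⟩
      have h1 := right (t + 1) (by omega)
      rw [← add_assoc] at h1
      rw [right t (by omega), h1]
      omega
  · rw [left 0 (by omega), zc]
  · have h1 : a + b - 1 = a + (b - 1) := by omega
    rw [h1, right _ (by omega)]
    omega

/-- Sixteen of the orderings of length `12`. -/
def blocks : Finset (List ℕ) := {
   [4, 1, 0, 3, 6, 5, 2, 11, 10, 9, 8, 7],
   [4, 1, 0, 3, 6, 9, 2, 5, 8, 11, 10, 7],
   [4, 1, 0, 3, 6, 11, 10, 9, 2, 5, 8, 7],
   [4, 1, 0, 3, 10, 11, 8, 9, 6, 5, 2, 7],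
   [4, 3, 2, 1, 0, 9, 6, 5, 8, 11, 10, 7],
   [4, 3, 2, 1, 0, 9, 8, 11, 10, 5, 6, 7],
   [4, 3, 2, 1, 0, 9, 10, 11, 6, 5, 8, 7],
   [4, 3, 6, 5, 0, 1, 2, 11, 10, 9, 8, 7],
   [4, 3, 6, 9, 2, 1, 0, 5, 8, 11, 10, 7],
   [4, 3, 6, 11, 10, 9, 2, 1, 0, 5, 8, 7],
   [4, 3, 10, 11, 8, 9, 6, 5, 0, 1, 2, 7],
   [4, 5, 2, 3, 0, 1, 10, 11, 8, 9, 6, 7],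
   [4, 5, 6, 1, 0, 3, 2, 11, 10, 9, 8, 7],
   [4, 5, 6, 9, 8, 11, 10, 3, 2, 1, 0, 7],
   [4, 5, 10, 11, 8, 9, 2, 3, 0, 1, 6, 7],
   [4, 9, 6, 5, 2, 3, 0, 1, 8, 11, 10, 7]}

set_option maxRecDepth 10000 in
theorem card_blocks : blocks.card = 16 := by decide

set_option maxRecDepth 10000 in
theorem isOddSumPath_of_mem_blocks : ∀ c ∈ blocks, IsOddSumPath 12 c := by decide

/-- Prepending the blocks multiplies the number of orderings by `16`. -/
theorem exists_extend {n N : ℕ}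
    (h : ∃ S : Finset (List ℕ), (∀ w ∈ S, IsOddSumPath n w) ∧ N ≤ S.card) :
    ∃ S : Finset (List ℕ), (∀ w ∈ S, IsOddSumPath (n + 12) w) ∧ 16 * N ≤ S.card := by
  obtain ⟨S, hS, hN⟩ := h
  refine ⟨(blocks ×ˢ S).image (fun p => p.1 ++ p.2.map (12 + ·)), ?_, ?_⟩
  · intro w hw
    obtain ⟨⟨c, v⟩, hp, rfl⟩ := Finset.mem_image.1 hw
    rw [Finset.mem_product] at hp
    rw [add_comm n]
    exact (isOddSumPath_of_mem_blocks c hp.1).append (hS v hp.2)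
  · rw [Finset.card_image_of_injOn, Finset.card_product, card_blocks]
    · exact Nat.mul_le_mul_left _ hN
    · rintro ⟨c, v⟩ hp ⟨c', v'⟩ hp' e
      simp only [Finset.coe_product, Set.mem_prod, Finset.mem_coe] at hp hp'
      have l := (isOddSumPath_of_mem_blocks c hp.1).length
      have l' := (isOddSumPath_of_mem_blocks c' hp'.1).length
      obtain ⟨h1, h2⟩ := List.append_inj e (l.trans l'.symm)
      have h3 : v = v' := List.map_injective_iff.2 (add_right_injective 12) h2
      simp only at h1
      rw [h1, h3]

theorem exists_paths (n : ℕ) (hn : 11 ≤ n) (hodd : Odd n) :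
    ∃ N, 5 * 2 ^ ((n - 1) / 3 - 2) + 1 ≤ n * N ∧
      ∃ S : Finset (List ℕ), (∀ w ∈ S, IsOddSumPath n w) ∧ N ≤ S.card := by
  induction n using Nat.strong_induction_on with
  | _ n ih =>
  by_cases h : 23 ≤ n
  · obtain ⟨k, rfl⟩ : ∃ k, n = k + 12 := ⟨n - 12, by omega⟩
    obtain ⟨N, h1, h2⟩ := ih k (by omega) (by omega) (by
      rw [Nat.odd_iff] at hodd ⊢; omega)
    refine ⟨16 * N, ?_, exists_extend h2⟩
    have e : (k + 12 - 1) / 3 - 2 = ((k - 1) / 3 - 2) + 4 := by omega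
    rw [e, pow_add]
    nlinarith
  · have : n = 11 ∨ n = 13 ∨ n = 15 ∨ n = 17 ∨ n = 19 ∨ n = 21 := by
      rw [Nat.odd_iff] at hodd; omega
    rcases this with rfl | rfl | rfl | rfl | rfl | rfl
    · exact ⟨1, by norm_num, {[4, 1, 0, 3, 8, 5, 2, 7, 10, 9, 6]}, by decide, by decide⟩
    · exact ⟨2, by norm_num,
        {[4, 1, 0, 3, 6, 5, 2, 11, 12, 9, 10, 7, 8],
         [4, 1, 0, 3, 6, 7, 10, 5, 2, 9, 12, 11, 8]}, by decide, by decide⟩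
    · exact ⟨2, by norm_num,
        {[4, 1, 0, 3, 6, 5, 2, 11, 12, 13, 14, 7, 8, 9, 10],
         [4, 1, 0, 3, 6, 7, 8, 9, 2, 5, 14, 13, 12, 11, 10]}, by decide, by decide⟩
    · exact ⟨16 * 1, by norm_num,
        exists_extend (n := 5) ⟨{[4, 3, 2, 1, 0]}, by decide, by decide⟩⟩
    · exact ⟨16 * 1, by norm_num,
        exists_extend (n := 7) ⟨{[4, 1, 0, 3, 6, 5, 2]}, by decide, by decide⟩⟩
    · exact ⟨4, by norm_num,
        {[4, 1, 0, 3, 6, 5, 2, 11, 8, 7, 10, 13, 12, 9, 18, 15, 14, 17, 20, 19, 16],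
         [4, 1, 0, 3, 6, 5, 2, 11, 8, 7, 10, 13, 12, 9, 18, 17, 20, 19, 14, 15, 16],
         [4, 1, 0, 3, 6, 5, 2, 11, 8, 7, 10, 13, 12, 9, 18, 19, 20, 15, 14, 17, 16],
         [4, 1, 0, 3, 6, 5, 2, 11, 8, 7, 10, 13, 14, 15, 18, 17, 20, 19, 12, 9, 16]},
        by decide, by decide⟩

/-- Half of `e` modulo the odd number `n`, for `e < n`. -/
def half (n e : ℕ) : ℕ := if e % 2 = 0 then e / 2 else (e + n) / 2

theorem half_lt {n e : ℕ} (h : e < n) : half n e < n := by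
  unfold half; split_ifs <;> omega

theorem half_inj {n e e' : ℕ} (hn : n % 2 = 1) (h : e < n) (h' : e' < n)
    (he : half n e = half n e') : e = e' := by
  unfold half at he; split_ifs at he <;> omega

/-- The labeling of the cycle obtained from the ordering `w` by halving modulo `n` and rotating
by `r`; the remainder modulo `n` only serves to make the value an element of `Fin n`. -/
def labeling (n : ℕ) (w : List ℕ) (r : Fin n) (i : Fin n) : Fin n :=
  ⟨half n (w.getD ((i + r) % n) 0) % n, Nat.mod_lt _ (by have := i.2; omega)⟩

theorem IsOddSumPath.getD_lt {n : ℕ} {w : List ℕ} (h : IsOddSumPath n w) {t : ℕ} (ht : t < n) :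
    w.getD t 0 < n := by
  have l := h.length
  have h1 : w.getD t 0 ∈ w := by
    rw [List.getD_eq_getElem _ _ (by omega)]; exact List.getElem_mem _
  simpa using h.1.mem_iff.1 h1

theorem IsOddSumPath.getD_inj {n : ℕ} {w : List ℕ} (h : IsOddSumPath n w) {t t' : ℕ}
    (ht : t < n) (ht' : t' < n) (e : w.getD t 0 = w.getD t' 0) : t = t' := by
  have l := h.length
  have nd : w.Nodup := h.1.nodup_iff.2 List.nodup_range
  rw [List.getD_eq_getElem _ _ (by omega), List.getD_eq_getElem _ _ (by omega)] at e
  exact (nd.getElem_inj_iff).1 e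

theorem IsOddSumPath.labeling_val {n : ℕ} {w : List ℕ} (h : IsOddSumPath n w) (r i : Fin n) :
    (labeling n w r i : ℕ) = half n (w.getD ((i + r) % n) 0) :=
  Nat.mod_eq_of_lt (half_lt (h.getD_lt (Nat.mod_lt _ (by have := i.2; omega))))

theorem exists_rotate {n : ℕ} (r : Fin n) {t : ℕ} (ht : t < n) :
    ∃ i : Fin n, ((i : ℕ) + r) % n = t := by
  refine ⟨⟨(t + (n - r)) % n, Nat.mod_lt _ (by omega)⟩, ?_⟩
  have h : t + (n - r) + r = t + n := by have := r.2; omega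
  simp [h, Nat.mod_eq_of_lt ht]

theorem rotate_inj {n a b r : ℕ} (ha : a < n) (hb : b < n) (h : (a + r) % n = (b + r) % n) :
    a = b := by
  have h1 : a ≡ b [MOD n] := Nat.ModEq.add_right_cancel' r h
  exact h1.eq_of_lt_of_lt ha hb

theorem IsOddSumPath.labeling_injective {n : ℕ} {w : List ℕ} (hn : n % 2 = 1)
    (h : IsOddSumPath n w) (r : Fin n) : Function.Injective (labeling n w r) := by
  intro i j e
  have hp : 0 < n := by omega
  have e' := congrArg Fin.val e
  rw [h.labeling_val, h.labeling_val] at e'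
  have e2 := half_inj hn (h.getD_lt (Nat.mod_lt _ hp)) (h.getD_lt (Nat.mod_lt _ hp)) e'
  exact Fin.ext (rotate_inj i.2 j.2 (h.getD_inj (Nat.mod_lt _ hp) (Nat.mod_lt _ hp) e2))

theorem IsOddSumPath.image_sums {n : ℕ} {w : List ℕ} (hn : n % 2 = 1)
    (h : IsOddSumPath n w) (r : Fin n) :
    Finset.image (fun i : Fin n =>
        ((labeling n w r i : ℕ) + 1) +
          ((labeling n w r ⟨((i : ℕ) + 1) % n, Nat.mod_lt _ (by omega)⟩ : ℕ) + 1))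
      Finset.univ = Finset.Icc (n / 2 + 2) (n / 2 + 2 + n - 1) := by
  symm
  -- The image has at most `n` elements, so it is enough that every value in the interval occurs.
  apply Finset.eq_of_subset_of_card_le
  · intro s hs
    rw [Finset.mem_Icc] at hs
    suffices H : ∃ t < n, half n (w.getD t 0) + half n (w.getD ((t + 1) % n) 0) + 2 = s by
      obtain ⟨t, ht, e⟩ := H
      obtain ⟨i, hi⟩ := exists_rotate r ht
      refine Finset.mem_image.2 ⟨i, Finset.mem_univ _, ?_⟩
      have hi' : (((i : ℕ) + 1) % n + r) % n = (t + 1) % n := by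
        rw [Nat.mod_add_mod, add_right_comm, ← hi, Nat.mod_add_mod]
      simp only [h.labeling_val, hi, hi']
      omega
    obtain ⟨-, sw, zw, ew⟩ := h
    rcases Nat.eq_or_lt_of_le hs.1 with h1 | h1
    · -- the smallest sum comes from the closing edge
      refine ⟨n - 1, by omega, ?_⟩
      have h2 : n - 1 + 1 = n := by omega
      rw [h2, Nat.mod_self, zw]
      unfold half
      split_ifs <;> omega
    · obtain ⟨t, ht, e⟩ := sw (s - (n / 2 + 3)) (by omega)
      refine ⟨t, by omega, ?_⟩
      rw [Nat.mod_eq_of_lt (by omega : t + 1 < n)]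
      unfold half
      split_ifs <;> omega
  · refine Finset.card_image_le.trans ?_
    rw [Nat.card_Icc, Finset.card_univ, Fintype.card_fin]
    omega

/-- Both the rotation and the ordering can be recovered from the labeling. -/
theorem labeling_inj {n : ℕ} {w w' : List ℕ} (hn : n % 2 = 1) (h : IsOddSumPath n w)
    (h' : IsOddSumPath n w') {r r' : Fin n} (e : labeling n w r = labeling n w' r') :
    r = r' ∧ w = w' := by
  have hp : 0 < n := by omega
  have key : ∀ i : Fin n, w.getD ((i + r) % n) 0 = w'.getD ((i + r') % n) 0 := by
    intro i
    have e' := congrArg Fin.val (congrFun e i)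
    rw [h.labeling_val, h'.labeling_val] at e'
    exact half_inj hn (h.getD_lt (Nat.mod_lt _ hp)) (h'.getD_lt (Nat.mod_lt _ hp)) e'
  have hr : r = r' := by
    obtain ⟨i, hi⟩ := exists_rotate r hp
    have h1 := key i
    rw [hi, h.2.2.1, ← h'.2.2.1] at h1
    have h2 := h'.getD_inj hp (Nat.mod_lt _ hp) h1
    rw [h2, add_comm, add_comm (i : ℕ)] at hi
    exact Fin.ext (rotate_inj r.2 r'.2 hi)
  refine ⟨hr, ?_⟩
  subst hr
  have l := h.length
  have l' := h'.length
  refine List.ext_getElem (l.trans l'.symm) fun t ht ht' => ?_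
  obtain ⟨i, hi⟩ := exists_rotate r (by omega : t < n)
  have h1 := key i
  rwa [hi, List.getD_eq_getElem _ _ ht, List.getD_eq_getElem _ _ ht'] at h1

/-- For odd `n ≥ 11`, the number of bijective labelings `f` of the vertices of the
cycle `C_n` with labels `{1,…,n}` (modeled as bijections `Fin n → Fin n`, vertex `i`
receiving label `f(i)+1`, with cycle edges joining `i` and `i+1 (mod n)`) whose sets of
sums of labels of adjacent vertices consist of `n` consecutive integers is at least
`5 · 2^{⌊(n-1)/3⌋-2} + 1`. -/
theorem cycle_sem_labeling_count (n : ℕ) (hn : 11 ≤ n) (hodd : Odd n) :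
    5 * 2 ^ ((n - 1) / 3 - 2) + 1 ≤
      Nat.card {f : Fin n → Fin n //
        Function.Bijective f ∧
        ∃ s : ℕ,
          Finset.image (fun i : Fin n =>
              ((f i : ℕ) + 1) +
                ((f ⟨((i : ℕ) + 1) % n, Nat.mod_lt _ (by omega)⟩ : ℕ) + 1))
            Finset.univ = Finset.Icc s (s + n - 1)} := by
  obtain ⟨N, hN, S, hS, hc⟩ := exists_paths n hn hodd
  rw [Nat.odd_iff] at hodd
  refine hN.trans ((Nat.mul_le_mul_left n hc).trans ?_)
  have hcard : n * S.card = Nat.card (Fin n × S) := by simp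
  rw [hcard]
  refine Nat.card_le_card_of_injective
    (fun p => ⟨labeling n p.2 p.1, ?_, n / 2 + 2, ?_⟩) ?_
  · exact Finite.injective_iff_bijective.1 ((hS _ p.2.2).labeling_injective hodd p.1)
  · exact (hS _ p.2.2).image_sums hodd p.1
  · rintro ⟨r, w⟩ ⟨r', w'⟩ e
    obtain ⟨h1, h2⟩ := labeling_inj hodd (hS _ w.2) (hS _ w'.2) (congrArg Subtype.val e)
    exact Prod.ext h1 (Subtype.ext h2)
end

section
/- For every odd integer n ≥ 11, the number s(n) of permutations σ of {1,...,n} for which the set {i + σ(i) : 1 ≤ i ≤ n} consists of n consecutive integers satisfies s(n) ≥ 5 · 2^{⌊(n-1)/3⌋ - 1} + 2. -/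
/-- A super edge-magic permutation of `{1,…,n}` (modeled on `Fin n` via the shift by `1`):
the set of sums `{i + σ(i)}` consists of `n` consecutive integers. -/
def IsSEMPerm (n : ℕ) (σ : Equiv.Perm (Fin n)) : Prop :=
  ∃ s : ℕ,
    Finset.image (fun i : Fin n => ((i : ℕ) + 1) + ((σ i : ℕ) + 1)) Finset.univ =
      Finset.Icc s (s + n - 1)

/-- `s(n)`: the number of super edge-magic permutations of `{1,…,n}`. -/
noncomputable def semPermCount (n : ℕ) : ℕ :=
  Nat.card {σ : Equiv.Perm (Fin n) // IsSEMPerm n σ}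

/-!
Permutations are written in one-line notation as lists of naturals, with positions and values
counted from `0`. Call a pair `(p, q)` of permutations of `{0,…,a-1}` *interlocking* if the sums
`i + p i` together with the shifted sums `i + q i + 3` are exactly `1,…,2a`.

Two facts make interlocking pairs useful.

* They concatenate: if `(p, q)` has size `a` and `(p', q')` has size `b`, then
  `(p ⊕ p', q ⊕ q')` (block sums of permutations) is interlocking of size `a + b`, because shifting
  both positions and values by `a` shifts all sums by `2a`. There are `4` pairs of size `3`, so the
  number of pairs is at least multiplied by `4` whenever the size grows by `3`
  (`HasPairs.add_three`).
* An interlocking pair of size `a` gives four super edge-magic permutations of size `2a + 3`: place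
  `p` at positions `0,…` with values `a,…`, follow it by one of the two super edge-magic
  permutations `r` of size `3` with values `2a,…`, and then by `q` with values `0,…`. The sums are
  `a + {1,…,2a}` and `3a + {1,2,3}`. Exchanging the roles of positions and values of the three
  blocks gives two more (`assemble`).

Size `3` has `4` pairs, size `4` has `8` and size `5` has `12`. For `a = 3 + 3k, 4 + 3k, 5 + 3k` and
`n = 2a + 3` this yields at least `16 · 4^k, 32 · 4^k, 48 · 4^k` permutations, against the required
`10 · 4^k + 2, 20 · 4^k + 2, 40 · 4^k + 2`.
-/

/-! ### Sums of a one-line notation -/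

/-- The sums `c + i + l[i]` of a list `l` read in one-line notation, in order of position. -/
def blockSums : ℕ → List ℕ → List ℕ
  | _, [] => []
  | c, v :: l => (c + v) :: blockSums (c + 1) l

lemma blockSums_append (c : ℕ) (l m : List ℕ) :
    blockSums c (l ++ m) = blockSums c l ++ blockSums (c + l.length) m := by
  induction l generalizing c with
  | nil => simp [blockSums]
  | cons v l ih => simp [blockSums, ih, add_assoc, add_comm 1]

lemma blockSums_map_add (c d : ℕ) (l : List ℕ) :
    blockSums c (l.map (d + ·)) = blockSums (d + c) l := by
  induction l generalizing c with
  | nil => simp [blockSums]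
  | cons v l ih =>
    simp only [List.map_cons, blockSums, ih, List.cons.injEq]
    exact ⟨by omega, by rw [add_assoc]⟩

lemma map_add_blockSums (c d : ℕ) (l : List ℕ) :
    (blockSums c l).map (d + ·) = blockSums (d + c) l := by
  induction l generalizing c with
  | nil => simp [blockSums]
  | cons v l ih => simp [blockSums, ih, add_assoc]

lemma mem_blockSums {c k : ℕ} {l : List ℕ} :
    k ∈ blockSums c l ↔ ∃ (i : ℕ) (h : i < l.length), k = c + i + l[i] := by
  induction l generalizing c with
  | nil => simp [blockSums]
  | cons v l ih =>
    simp only [blockSums, List.mem_cons, ih]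
    constructor
    · rintro (h | ⟨i, h, e⟩)
      · exact ⟨0, by simp, by simpa using h⟩
      · exact ⟨i + 1, by simpa using h, by simp only [List.getElem_cons_succ]; omega⟩
    · rintro ⟨i, h, e⟩
      cases i with
      | zero => left; simpa using e
      | succ i =>
        right
        refine ⟨i, by simpa using h, ?_⟩
        simp only [List.getElem_cons_succ] at e
        omega

/-! ### Interlocking pairs -/

/-- The pair `w = (p, q)` consists of one-line notations of permutations of `{0,…,a-1}` such that
the sums of `p` and the sums of `q` shifted by `3` together are `1,…,2a`. -/
def Interlocking (a : ℕ) (w : List ℕ × List ℕ) : Prop :=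
  w.1.Perm (List.range' 0 a) ∧ w.2.Perm (List.range' 0 a) ∧
    (blockSums 0 w.1 ++ blockSums 3 w.2).Perm (List.range' 1 (2 * a))

instance (a : ℕ) (w : List ℕ × List ℕ) : Decidable (Interlocking a w) := by
  unfold Interlocking; infer_instance

/-- There are at least `N` interlocking pairs of size `a`. -/
def HasPairs (a N : ℕ) : Prop :=
  ∃ F : Finset (List ℕ × List ℕ), (∀ w ∈ F, Interlocking a w) ∧ N ≤ F.card

/-- The block sum of two pairs, the first of size `a`. -/
def joinPairs (a : ℕ) (w v : List ℕ × List ℕ) : List ℕ × List ℕ :=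
  (w.1 ++ v.1.map (a + ·), w.2 ++ v.2.map (a + ·))

lemma perm_range'_append_map {a b s t c : ℕ} {l m : List ℕ} (hl : l.Perm (List.range' s a))
    (hm : m.Perm (List.range' t b)) (h : c + t = s + a) :
    (l ++ m.map (c + ·)).Perm (List.range' s (a + b)) := by
  rw [← List.range'_append_1, ← h, ← List.map_add_range']
  exact hl.append (hm.map _)

lemma Interlocking.join {a b : ℕ} {w v : List ℕ × List ℕ} (hw : Interlocking a w)
    (hv : Interlocking b v) : Interlocking (a + b) (joinPairs a w v) := by
  obtain ⟨hp, hq, hs⟩ := hw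
  obtain ⟨hp', hq', hs'⟩ := hv
  refine ⟨perm_range'_append_map hp hp' (by omega), perm_range'_append_map hq hq' (by omega), ?_⟩
  have key := perm_range'_append_map (c := 2 * a) hs hs' (by omega)
  have e1 : w.1.length = a := by simpa using hp.length_eq
  have e2 : w.2.length = a := by simpa using hq.length_eq
  rw [mul_add]
  refine List.Perm.trans ?_ key
  simp only [joinPairs, blockSums_append, blockSums_map_add, List.map_append, map_add_blockSums,
    e1, e2]
  rw [show a + (0 + a) = 2 * a + 0 by omega, show a + (3 + a) = 2 * a + 3 by omega]
  rw [← Multiset.coe_eq_coe]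
  simp only [← Multiset.coe_add]
  abel

lemma HasPairs.of_list {a : ℕ} (L : List (List ℕ × List ℕ)) (h : ∀ w ∈ L, Interlocking a w)
    (hL : L.Nodup) : HasPairs a L.length :=
  ⟨L.toFinset, by simpa using h, by rw [List.toFinset_card_of_nodup hL]⟩

lemma hasPairs_three : HasPairs 3 4 :=
  HasPairs.of_list [([1, 2, 0], [1, 2, 0]), ([1, 2, 0], [2, 0, 1]), ([2, 0, 1], [1, 2, 0]),
    ([2, 0, 1], [2, 0, 1])] (by decide) (by decide)

lemma hasPairs_four : HasPairs 4 8 :=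
  HasPairs.of_list [([1, 2, 0, 3], [1, 3, 0, 2]), ([1, 2, 0, 3], [2, 0, 3, 1]),
    ([1, 3, 0, 2], [0, 2, 3, 1]), ([1, 3, 0, 2], [0, 3, 1, 2]), ([2, 0, 1, 3], [1, 3, 0, 2]),
    ([2, 0, 1, 3], [2, 0, 3, 1]), ([2, 0, 3, 1], [0, 2, 3, 1]), ([2, 0, 3, 1], [0, 3, 1, 2])]
    (by decide) (by decide)

lemma hasPairs_five : HasPairs 5 12 :=
  HasPairs.of_list [([1, 2, 0, 3, 4], [1, 3, 0, 4, 2]), ([1, 2, 0, 3, 4], [2, 0, 4, 1, 3]),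
    ([1, 3, 0, 2, 4], [0, 2, 4, 1, 3]), ([1, 3, 0, 2, 4], [0, 3, 1, 4, 2]),
    ([1, 3, 0, 4, 2], [0, 1, 3, 4, 2]), ([1, 3, 0, 4, 2], [0, 1, 4, 2, 3]),
    ([2, 0, 1, 3, 4], [1, 3, 0, 4, 2]), ([2, 0, 1, 3, 4], [2, 0, 4, 1, 3]),
    ([2, 0, 3, 1, 4], [0, 2, 4, 1, 3]), ([2, 0, 3, 1, 4], [0, 3, 1, 4, 2]),
    ([2, 0, 4, 1, 3], [0, 1, 3, 4, 2]), ([2, 0, 4, 1, 3], [0, 1, 4, 2, 3])]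
    (by decide) (by decide)

lemma map_add_injective (a : ℕ) : Function.Injective (List.map (a + ·)) :=
  List.map_injective_iff.2 (add_right_injective a)

lemma Interlocking.length_eq {a : ℕ} {w : List ℕ × List ℕ} (hw : Interlocking a w) :
    w.1.length = a ∧ w.2.length = a :=
  ⟨by simpa using hw.1.length_eq, by simpa using hw.2.1.length_eq⟩

lemma HasPairs.mul {a b N M : ℕ} (h : HasPairs a N) (h' : HasPairs b M) :
    HasPairs (a + b) (N * M) := by
  classical
  obtain ⟨F, hF, hN⟩ := h
  obtain ⟨G, hG, hM⟩ := h'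
  refine ⟨(F ×ˢ G).image fun x => joinPairs a x.1 x.2, ?_, ?_⟩
  · simp only [Finset.mem_image, Finset.mem_product]
    rintro _ ⟨x, ⟨h1, h2⟩, rfl⟩
    exact (hF _ h1).join (hG _ h2)
  · rw [Finset.card_image_of_injOn, Finset.card_product]
    · exact Nat.mul_le_mul hN hM
    · rintro ⟨w, v⟩ hx ⟨w', v'⟩ hy e
      simp only [Finset.coe_product, Set.mem_prod, Finset.mem_coe] at hx hy
      obtain ⟨e1, e2⟩ := Prod.mk.inj e
      have l1 := (hF _ hx.1).length_eq
      have l2 := (hF _ hy.1).length_eq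
      obtain ⟨p1, p2⟩ := List.append_inj e1 (l1.1.trans l2.1.symm)
      obtain ⟨q1, q2⟩ := List.append_inj e2 (l1.2.trans l2.2.symm)
      exact Prod.ext (Prod.ext p1 q1) (Prod.ext (map_add_injective a p2) (map_add_injective a q2))

lemma HasPairs.add_three {a N : ℕ} (h : HasPairs a N) (k : ℕ) :
    HasPairs (a + 3 * k) (N * 4 ^ k) := by
  induction k with
  | zero => simpa using h
  | succ k ih =>
    have := ih.mul hasPairs_three
    rwa [add_assoc, mul_assoc, ← pow_succ] at this

/-! ### Super edge-magic permutations from interlocking pairs -/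

/-- The super edge-magic permutations `[1, 2, 0]` and `[2, 0, 1]` of size `3`. -/
def tri (b : Bool) : List ℕ := if b then [1, 2, 0] else [2, 0, 1]

lemma tri_perm (b : Bool) : (tri b).Perm (List.range' 0 3) := by cases b <;> decide

lemma tri_sums (b : Bool) : (blockSums 0 (tri b)).Perm (List.range' 1 3) := by cases b <;> decide

lemma tri_length (b : Bool) : (tri b).length = 3 := by cases b <;> rfl

lemma tri_injective : Function.Injective tri := by
  intro b c; revert b c; decide

/-- The one-line notation of a permutation of size `2a + 3` built from a pair `w` of size `a` and a
permutation of size `3`. The flag `x.1` selects one of two arrangements of the three blocks, which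
differ by exchanging the first position and the smallest value of every block. -/
def assemble (a : ℕ) (x : Bool × Bool) (w : List ℕ × List ℕ) : List ℕ :=
  if x.1 then w.1.map (a + ·) ++ ((tri x.2).map (2 * a + ·) ++ w.2)
  else w.2.map (a + 3 + ·) ++ (w.1 ++ (tri x.2).map (a + ·))

lemma assemble_perm {a : ℕ} {w : List ℕ × List ℕ} (hw : Interlocking a w) (x : Bool × Bool) :
    (assemble a x w).Perm (List.range' 0 (2 * a + 3)) := by
  obtain ⟨hp, hq, -⟩ := hw
  obtain ⟨b, c⟩ := x
  cases b
  · have h1 := perm_range'_append_map (c := a) hp (tri_perm c) (by omega)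
    have h2 := perm_range'_append_map (c := a + 3) h1 hq (by omega)
    rw [show a + 3 + a = 2 * a + 3 by omega] at h2
    refine List.Perm.trans ?_ h2
    simp only [assemble]
    exact List.perm_append_comm
  · have h1 := perm_range'_append_map (c := a) hq hp (by omega)
    have h2 := perm_range'_append_map (c := 2 * a) h1 (tri_perm c) (by omega)
    rw [← two_mul] at h2
    refine List.Perm.trans ?_ h2
    simp only [assemble]
    rw [← Multiset.coe_eq_coe]
    simp only [if_true, ← Multiset.coe_add]
    abel

lemma assemble_sums {a : ℕ} {w : List ℕ × List ℕ} (hw : Interlocking a w) (x : Bool × Bool) :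
    (blockSums 0 (assemble a x w)).Perm (List.range' (a + 1) (2 * a + 3)) := by
  obtain ⟨l1, l2⟩ := hw.length_eq
  have key := (perm_range'_append_map (c := 2 * a) hw.2.2 (tri_sums x.2) (by omega)).map (a + ·)
  rw [List.map_add_range'] at key
  refine List.Perm.trans ?_ key
  obtain ⟨b, c⟩ := x
  rw [← Multiset.coe_eq_coe]
  cases b
  · simp only [assemble, blockSums_append, blockSums_map_add, List.map_append, map_add_blockSums,
      List.length_map, l1, l2, Bool.false_eq_true, if_false, ← Multiset.coe_add]
    rw [show a + (0 + a + a) = a + (2 * a + 0) by omega, show 0 + a = a + 0 by omega,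
      show a + 3 + 0 = a + 3 by omega]
    abel
  · simp only [assemble, blockSums_append, blockSums_map_add, List.map_append, map_add_blockSums,
      List.length_map, l1, tri_length, if_true, ← Multiset.coe_add]
    rw [show 2 * a + (0 + a) = a + (2 * a + 0) by omega, show 0 + a + 3 = a + 3 by omega]
    abel

/-- The value at position `a` is at least `2a` in one arrangement and less than `a` in the other,
so the two arrangements never agree. -/
lemma assemble_arrangement_ne {a : ℕ} (ha : 0 < a) {w v : List ℕ × List ℕ}
    (hw : Interlocking a w) (hv : Interlocking a v) (b c : Bool) :
    assemble a (true, b) w ≠ assemble a (false, c) v := by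
  intro e
  obtain ⟨l1, l2⟩ := hw.length_eq
  obtain ⟨m1, m2⟩ := hv.length_eq
  have e' := congrArg (fun l => (l.drop a).head?) e
  obtain ⟨p, q⟩ := v
  cases p with
  | nil => simp at m1; omega
  | cons z p =>
    have hz : z ∈ List.range' 0 a := hv.1.subset (by simp)
    simp only [List.mem_range'_1] at hz
    simp only [assemble, if_true, Bool.false_eq_true, if_false] at e'
    rw [List.drop_left' (by simpa using l1), List.drop_left' (by simpa using m2)] at e'
    cases b <;> simp [tri] at e' <;> omega

lemma assemble_injOn {a : ℕ} (ha : 0 < a) {w v : List ℕ × List ℕ} (hw : Interlocking a w)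
    (hv : Interlocking a v) {x y : Bool × Bool} (e : assemble a x w = assemble a y v) :
    x = y ∧ w = v := by
  obtain ⟨l1, l2⟩ := hw.length_eq
  obtain ⟨m1, m2⟩ := hv.length_eq
  obtain ⟨b, c⟩ := x
  obtain ⟨b', c'⟩ := y
  cases b <;> cases b'
  · simp only [assemble, Bool.false_eq_true, if_false] at e
    obtain ⟨e1, e2⟩ := List.append_inj e (by simp [l2, m2])
    obtain ⟨e2, e3⟩ := List.append_inj e2 (l1.trans m1.symm)
    exact ⟨by rw [tri_injective (map_add_injective _ e3)],
      Prod.ext e2 (map_add_injective _ e1)⟩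
  · exact absurd e.symm (assemble_arrangement_ne ha hv hw _ _)
  · exact absurd e (assemble_arrangement_ne ha hw hv _ _)
  · simp only [assemble, if_true] at e
    obtain ⟨e1, e2⟩ := List.append_inj e (by simp [l1, m1])
    obtain ⟨e2, e3⟩ := List.append_inj e2 (by simp [tri_length])
    exact ⟨by rw [tri_injective (map_add_injective _ e2)],
      Prod.ext (map_add_injective _ e1) e3⟩

/-! ### Counting -/

/-- A list that is a permutation of `0,…,n-1` with consecutive sums is the one-line notation of a
super edge-magic permutation. -/
lemma exists_semPerm {n s : ℕ} (hn : 0 < n) {l : List ℕ} (hl : l.Perm (List.range' 0 n))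
    (hs : (blockSums 0 l).Perm (List.range' s n)) :
    ∃ σ : {σ : Equiv.Perm (Fin n) // IsSEMPerm n σ}, l = List.ofFn fun i => (σ.1 i : ℕ) := by
  have hlen : l.length = n := by simpa using hl.length_eq
  have hnd : l.Nodup := hl.nodup_iff.2 List.nodup_range'
  have hlt : ∀ i (h : i < l.length), l[i] < n := by
    intro i h
    have := hl.subset (List.getElem_mem h)
    simp only [List.mem_range'_1] at this
    omega
  let f : Fin n → Fin n := fun i => ⟨l[(i : ℕ)], hlt _ (by omega)⟩
  have hf : Function.Injective f := by
    intro i j h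
    have h' : l[(i : ℕ)] = l[(j : ℕ)] := congrArg Fin.val h
    exact Fin.ext ((hnd.getElem_inj_iff).1 h')
  refine ⟨⟨Equiv.ofBijective f (Finite.injective_iff_bijective.1 hf), s + 2, ?_⟩, ?_⟩
  · ext k
    simp only [Finset.mem_image, Finset.mem_univ, true_and, Finset.mem_Icc,
      Equiv.ofBijective_apply]
    constructor
    · rintro ⟨i, rfl⟩
      have : (i : ℕ) + l[(i : ℕ)] ∈ List.range' s n :=
        hs.subset (mem_blockSums.2 ⟨i, by omega, by omega⟩)
      simp only [List.mem_range'_1] at this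
      simp only [f]
      omega
    · intro hk
      have : k - 2 ∈ blockSums 0 l := hs.symm.subset (by simp only [List.mem_range'_1]; omega)
      obtain ⟨i, hi, e⟩ := mem_blockSums.1 this
      refine ⟨⟨i, by omega⟩, ?_⟩
      simp only [f]
      omega
  · apply List.ext_getElem
    · simp [hlen]
    · intro i h1 h2
      simp [f]

lemma HasPairs.le_semPermCount {a N : ℕ} (ha : 0 < a) (h : HasPairs a N) :
    4 * N ≤ semPermCount (2 * a + 3) := by
  obtain ⟨F, hF, hN⟩ := h
  have hex : ∀ t : (Bool × Bool) × F, ∃ σ : {σ : Equiv.Perm (Fin (2 * a + 3)) // IsSEMPerm _ σ},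
      assemble a t.1 t.2.1 = List.ofFn fun i => (σ.1 i : ℕ) := fun t =>
    exists_semPerm (by omega) (assemble_perm (hF _ t.2.2) t.1) (assemble_sums (hF _ t.2.2) t.1)
  choose g hg using hex
  have hinj : Function.Injective g := by
    intro t u e
    have h := assemble_injOn ha (hF _ t.2.2) (hF _ u.2.2) ((hg t).trans (e ▸ (hg u).symm))
    exact Prod.ext h.1 (Subtype.ext h.2)
  have := Nat.card_le_card_of_injective g hinj
  simp only [Nat.card_prod, Nat.card_eq_fintype_card (α := Bool), Fintype.card_bool,
    Nat.card_eq_fintype_card (α := F), Fintype.card_coe] at this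
  unfold semPermCount
  omega

/-- For odd `n ≥ 11`: `s(n) ≥ 5 · 2^{⌊(n-1)/3⌋-1} + 2`. -/
theorem sem_perm_count_lower_bound (n : ℕ) (hn : 11 ≤ n) (hodd : Odd n) :
    5 * 2 ^ ((n - 1) / 3 - 1) + 2 ≤ semPermCount n := by
  obtain ⟨m, rfl⟩ := hodd
  -- `m = a + 1` with `n = 2a + 3`, and `k` is the number of size-`3` pairs appended to a seed.
  obtain ⟨k, hk⟩ : ∃ k, m = 3 + 3 * k + 1 ∨ m = 4 + 3 * k + 1 ∨ m = 5 + 3 * k + 1 :=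
    ⟨(m - 4) / 3, by omega⟩
  have h4 : 1 ≤ 4 ^ k := Nat.one_le_pow _ _ (by norm_num)
  have hpow (j : ℕ) : 2 ^ (2 * k + j) = 4 ^ k * 2 ^ j := by rw [pow_add, pow_mul]; norm_num
  rcases hk with rfl | rfl | rfl
  · have h := (hasPairs_three.add_three k).le_semPermCount (by omega)
    rw [show (2 * (3 + 3 * k + 1) + 1 - 1) / 3 - 1 = 2 * k + 1 by omega, hpow,
      show 2 * (3 + 3 * k + 1) + 1 = 2 * (3 + 3 * k) + 3 by omega]
    omega
  · have h := (hasPairs_four.add_three k).le_semPermCount (by omega)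
    rw [show (2 * (4 + 3 * k + 1) + 1 - 1) / 3 - 1 = 2 * k + 2 by omega, hpow,
      show 2 * (4 + 3 * k + 1) + 1 = 2 * (4 + 3 * k) + 3 by omega]
    omega
  · have h := (hasPairs_five.add_three k).le_semPermCount (by omega)
    rw [show (2 * (5 + 3 * k + 1) + 1 - 1) / 3 - 1 = 2 * k + 3 by omega, hpow,
      show 2 * (5 + 3 * k + 1) + 1 = 2 * (5 + 3 * k) + 3 by omega]
    omega
end
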